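/- arXiv:math/0608757 — 5 statements merged into one kernel-verified Lean document; each statement's English description precedes it below -/
import Mathlib

section
/- Let ν > 0 and define C : ℝ⁴ → ℝ by C(x,t,u,p) = −0.01·t·(t·u − x)²·p². Let u : ℝ × ℝ → ℝ be a smooth (C^∞) solution of the modified Burgers equation ∂u/∂t + u·∂u/∂x − ν·∂²u/∂x² + ∂/∂x[ C(x,t,u(x,t),∂u/∂x(x,t))·∂u/∂x(x,t) ] = 0 on all of ℝ². Then for every ε ∈ ℝ, the function v(x,t) = u(x − εt, t) + ε is also a smooth solution of the same modified equation (the differential approximation of the invariant scheme is preserved by the Galilean transformation (x,t,u) ↦ (x + εt, t, u + ε)). -/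
/-- Partial derivative with respect to the first (space) variable. -/
noncomputable def pdx (u : ℝ × ℝ → ℝ) : ℝ × ℝ → ℝ :=
  fun p => deriv (fun y => u (y, p.2)) p.1

/-- Partial derivative with respect to the second (time) variable. -/
noncomputable def pdt (u : ℝ × ℝ → ℝ) : ℝ × ℝ → ℝ :=
  fun p => deriv (fun s => u (p.1, s)) p.2

/-- The artificial viscosity coefficient \`C(x,t,u,p) = −0.01 t (tu − x)² p²\`. -/
noncomputable def Cvisc (x t u p : ℝ) : ℝ := -0.01 * t * (t * u - x) ^ 2 * p ^ 2

/-- \`u\` is a smooth solution of the modified Burgers equation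
\`u_t + u u_x − ν u_xx + (C(x,t,u,u_x) u_x)_x = 0\`, the differential
approximation of the invariant scheme. -/
def IsModifiedBurgersSolution (ν : ℝ) (u : ℝ × ℝ → ℝ) : Prop :=
  ContDiff ℝ (⊤ : ℕ∞) u ∧
    ∀ p : ℝ × ℝ,
      pdt u p + u p * pdx u p - ν * pdx (pdx u) p
        + pdx (fun q => Cvisc q.1 q.2 (u q) (pdx u q) * pdx u q) p = 0

/-!
In the moving frame `(x - εt, t)` the time derivative of `u` acquires the extra term `-ε u_x`, which
cancels the term `ε u_x` produced in `u u_x` by adding `ε` to `u`. The `x`-derivatives merely move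
with the frame, and so does the flux `C u_x`, because `C` depends on `x` and `u` only through the
Galilean invariant `t u - x`.
-/

/-- The change of frame `(x, t) ↦ (x - εt, t)` to coordinates moving with velocity `ε`. -/
def galileanShift (ε : ℝ) (p : ℝ × ℝ) : ℝ × ℝ :=
  (p.1 - ε * p.2, p.2)

/-- The action on functions of the Galilean transformation `(x, t, u) ↦ (x + εt, t, u + ε)`:
the graph of `galileanBoost ε u` is the image of the graph of `u`. -/
def galileanBoost (ε : ℝ) (u : ℝ × ℝ → ℝ) : ℝ × ℝ → ℝ :=
  fun p => u (galileanShift ε p) + ε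

/-- Invariance of a coefficient `C(x, t, u, u_x)` under all Galilean transformations, which leave
`u_x` unchanged. -/
def IsGalileanInvariant (C : ℝ → ℝ → ℝ → ℝ → ℝ) : Prop :=
  ∀ ε x t w p, C (x + ε * t) t (w + ε) p = C x t w p

/-- The flux `C(x, t, u, u_x) u_x` of an artificial viscosity with coefficient `C`. -/
noncomputable def viscousFlux (C : ℝ → ℝ → ℝ → ℝ → ℝ) (u : ℝ × ℝ → ℝ) : ℝ × ℝ → ℝ :=
  fun q => C q.1 q.2 (u q) (pdx u q) * pdx u q

/-- The left-hand side `u_t + u u_x - ν u_xx + (C(x, t, u, u_x) u_x)_x` of the Burgers equation with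
artificial viscosity coefficient `C`. -/
noncomputable def burgersResidual (ν : ℝ) (C : ℝ → ℝ → ℝ → ℝ → ℝ) (u : ℝ × ℝ → ℝ) : ℝ × ℝ → ℝ :=
  fun p => pdt u p + u p * pdx u p - ν * pdx (pdx u) p + pdx (viscousFlux C u) p

/-- Smooth solutions of the Burgers equation with an arbitrary artificial viscosity coefficient `C`;
the case `C = Cvisc` is `IsModifiedBurgersSolution`. -/
def IsViscousBurgersSolution (ν : ℝ) (C : ℝ → ℝ → ℝ → ℝ → ℝ) (u : ℝ × ℝ → ℝ) : Prop :=
  ContDiff ℝ (⊤ : ℕ∞) u ∧ ∀ p, burgersResidual ν C u p = 0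

theorem pdx_eq_fderiv {f : ℝ × ℝ → ℝ} {p : ℝ × ℝ} (hf : DifferentiableAt ℝ f p) :
    pdx f p = fderiv ℝ f p (1, 0) :=
  (hf.hasFDerivAt.comp_hasDerivAt p.1
    ((hasDerivAt_id p.1).prodMk (hasDerivAt_const p.1 p.2))).deriv

theorem pdt_eq_fderiv {f : ℝ × ℝ → ℝ} {p : ℝ × ℝ} (hf : DifferentiableAt ℝ f p) :
    pdt f p = fderiv ℝ f p (0, 1) :=
  (hf.hasFDerivAt.comp_hasDerivAt p.2
    ((hasDerivAt_const p.2 p.1).prodMk (hasDerivAt_id p.2))).deriv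

theorem fderiv_apply_eq_pdx_add_pdt {f : ℝ × ℝ → ℝ} {p : ℝ × ℝ} (hf : DifferentiableAt ℝ f p)
    (a b : ℝ) : fderiv ℝ f p (a, b) = a * pdx f p + b * pdt f p := by
  have decomposition : ((a, b) : ℝ × ℝ) = a • (1, 0) + b • (0, 1) := by simp
  rw [decomposition, map_add, map_smul, map_smul, pdx_eq_fderiv hf, pdt_eq_fderiv hf,
    smul_eq_mul, smul_eq_mul]

theorem pdx_add_const (f : ℝ × ℝ → ℝ) (c : ℝ) : pdx (fun p => f p + c) = pdx f := by
  funext p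
  exact deriv_add_const c

theorem pdt_add_const (f : ℝ × ℝ → ℝ) (c : ℝ) : pdt (fun p => f p + c) = pdt f := by
  funext p
  exact deriv_add_const c

theorem pdx_comp_galileanShift (f : ℝ × ℝ → ℝ) (ε : ℝ) :
    pdx (f ∘ galileanShift ε) = pdx f ∘ galileanShift ε := by
  funext p
  exact deriv_comp_sub_const (f := fun y => f (y, p.2)) (a := ε * p.2) (x := p.1)

theorem pdt_comp_galileanShift {f : ℝ × ℝ → ℝ} {ε : ℝ} {p : ℝ × ℝ}
    (hf : DifferentiableAt ℝ f (galileanShift ε p)) :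
    pdt (f ∘ galileanShift ε) p =
      pdt f (galileanShift ε p) - ε * pdx f (galileanShift ε p) := by
  have hasDerivAt_shift : HasDerivAt (fun s => galileanShift ε (p.1, s)) (-ε, 1) p.2 := by
    simpa [galileanShift] using
      (((hasDerivAt_id p.2).const_mul ε).const_sub p.1).prodMk (hasDerivAt_id p.2)
  calc
    pdt (f ∘ galileanShift ε) p = fderiv ℝ f (galileanShift ε p) (-ε, 1) :=
      (hf.hasFDerivAt.comp_hasDerivAt_of_eq p.2 hasDerivAt_shift rfl).deriv
    _ = pdt f (galileanShift ε p) - ε * pdx f (galileanShift ε p) := by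
      rw [fderiv_apply_eq_pdx_add_pdt hf]
      ring

theorem pdx_galileanBoost (ε : ℝ) (u : ℝ × ℝ → ℝ) :
    pdx (galileanBoost ε u) = pdx u ∘ galileanShift ε :=
  (pdx_add_const (u ∘ galileanShift ε) ε).trans (pdx_comp_galileanShift u ε)

theorem pdt_galileanBoost {ε : ℝ} {u : ℝ × ℝ → ℝ} {p : ℝ × ℝ}
    (hu : DifferentiableAt ℝ u (galileanShift ε p)) :
    pdt (galileanBoost ε u) p =
      pdt u (galileanShift ε p) - ε * pdx u (galileanShift ε p) :=
  (congrFun (pdt_add_const (u ∘ galileanShift ε) ε) p).trans (pdt_comp_galileanShift hu)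

theorem contDiff_galileanBoost {n : WithTop ℕ∞} {u : ℝ × ℝ → ℝ} (hu : ContDiff ℝ n u) (ε : ℝ) :
    ContDiff ℝ n (galileanBoost ε u) := by
  unfold galileanBoost galileanShift
  fun_prop

theorem isGalileanInvariant_Cvisc : IsGalileanInvariant Cvisc := by
  intro ε x t w p
  unfold Cvisc
  ring

theorem viscousFlux_galileanBoost {C : ℝ → ℝ → ℝ → ℝ → ℝ} (hC : IsGalileanInvariant C)
    (ε : ℝ) (u : ℝ × ℝ → ℝ) :
    viscousFlux C (galileanBoost ε u) = viscousFlux C u ∘ galileanShift ε := by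
  funext q
  have coefficient_eq (w p : ℝ) : C q.1 q.2 (w + ε) p = C (q.1 - ε * q.2) q.2 w p := by
    simpa only [sub_add_cancel] using hC ε (q.1 - ε * q.2) q.2 w p
  simp only [viscousFlux, pdx_galileanBoost, Function.comp_apply, galileanBoost, coefficient_eq,
    galileanShift]

theorem burgersResidual_galileanBoost {C : ℝ → ℝ → ℝ → ℝ → ℝ} (hC : IsGalileanInvariant C)
    (ν : ℝ) {ε : ℝ} {u : ℝ × ℝ → ℝ} {p : ℝ × ℝ}
    (hu : DifferentiableAt ℝ u (galileanShift ε p)) :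
    burgersResidual ν C (galileanBoost ε u) p = burgersResidual ν C u (galileanShift ε p) := by
  simp only [burgersResidual, pdt_galileanBoost hu, pdx_galileanBoost, pdx_comp_galileanShift,
    viscousFlux_galileanBoost hC, Function.comp_apply, galileanBoost]
  ring

theorem modified_burgers_invariant_galilean_general {ν : ℝ} {C : ℝ → ℝ → ℝ → ℝ → ℝ}
    (hC : IsGalileanInvariant C) {u : ℝ × ℝ → ℝ} (hu : IsViscousBurgersSolution ν C u) (ε : ℝ) :
    IsViscousBurgersSolution ν C (galileanBoost ε u) := by
  obtain ⟨smooth, residual_eq_zero⟩ := hu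
  have differentiable : Differentiable ℝ u := smooth.differentiable (by simp)
  refine ⟨contDiff_galileanBoost smooth ε, fun p => ?_⟩
  rw [burgersResidual_galileanBoost hC ν (differentiable _), residual_eq_zero]

/-- The differential approximation of the invariant scheme is preserved by the
Galilean transformation `(x,t,u) ↦ (x + εt, t, u + ε)`. -/
theorem modified_burgers_invariant_galilean (ν : ℝ) (hν : 0 < ν)
    (u : ℝ × ℝ → ℝ) (hu : IsModifiedBurgersSolution ν u) (ε : ℝ) :
    IsModifiedBurgersSolution ν (fun p => u (p.1 - ε * p.2, p.2) + ε) :=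
  modified_burgers_invariant_galilean_general isGalileanInvariant_Cvisc hu ε
end

section
/- Let ν > 0 and define C : ℝ⁴ → ℝ by C(x,t,u,p) = −0.01·t·(t·u − x)²·p². Let u : ℝ × ℝ → ℝ be a smooth (C^∞) solution of the modified Burgers equation ∂u/∂t + u·∂u/∂x − ν·∂²u/∂x² + ∂/∂x[ C(x,t,u(x,t),∂u/∂x(x,t))·∂u/∂x(x,t) ] = 0 on all of ℝ². Then for every λ > 0, the function v(x,t) = λ·u(λx, λ²t) is also a smooth solution of the same modified equation with the same viscosity ν (the differential approximation of the invariant scheme is preserved by the dilatation (x,t,u) ↦ (λ⁻¹x, λ⁻²t, λu)). -/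
/-!
Each of the four terms `u_t`, `u u_x`, `u_xx` and `(C u_x)_x` is homogeneous of degree three under
`u ↦ l u(l x, l² t)`; for the last one this holds because `C` itself is invariant. Hence the
left-hand side of the equation for the dilated function is `l³` times that of `u` at the dilated
point.
-/

/-- The function `(x, t) ↦ a * w (l * x, m * t)`: `w` with its arguments and its values rescaled by
independent weights. The dilatation of the Burgers equation has weights `a = l` and `m = l ^ 2`. -/
def rescale (a l m : ℝ) (w : ℝ × ℝ → ℝ) : ℝ × ℝ → ℝ :=
  fun p => a * w (l * p.1, m * p.2)

section Rescale

variable (a l m : ℝ)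

theorem contDiff_rescale {w : ℝ × ℝ → ℝ} {n : WithTop ℕ∞} (hw : ContDiff ℝ n w) :
    ContDiff ℝ n (rescale a l m w) := by
  unfold rescale
  fun_prop

variable (w : ℝ × ℝ → ℝ)

theorem pdx_rescale : pdx (rescale a l m w) = rescale (a * l) l m (pdx w) := by
  funext p
  have chain_rule := deriv_comp_mul_left l (fun y => w (y, m * p.2)) p.1
  simp only [pdx, rescale, deriv_const_mul_field, chain_rule, smul_eq_mul, mul_assoc]

theorem pdt_rescale : pdt (rescale a l m w) = rescale (a * m) l m (pdt w) := by
  funext p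
  have chain_rule := deriv_comp_mul_left m (fun s => w (l * p.1, s)) p.2
  simp only [pdt, rescale, deriv_const_mul_field, chain_rule, smul_eq_mul, mul_assoc]

end Rescale

theorem viscousFlux_rescale {C : ℝ → ℝ → ℝ → ℝ → ℝ} {a l m : ℝ}
    (hC : ∀ x t z p, C x t (a * z) (a * l * p) = C (l * x) (m * t) z p) (u : ℝ × ℝ → ℝ) :
    viscousFlux C (rescale a l m u) = rescale (a * l) l m (viscousFlux C u) := by
  funext q
  simp only [viscousFlux, pdx_rescale]
  simp only [rescale, viscousFlux, hC]
  ring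

theorem burgersResidual_rescale {C : ℝ → ℝ → ℝ → ℝ → ℝ} {l : ℝ}
    (hC : ∀ x t z p, C x t (l * z) (l * l * p) = C (l * x) (l ^ 2 * t) z p)
    (ν : ℝ) (u : ℝ × ℝ → ℝ) :
    burgersResidual ν C (rescale l l (l ^ 2) u) =
      rescale (l ^ 3) l (l ^ 2) (burgersResidual ν C u) := by
  funext p
  simp only [burgersResidual, viscousFlux_rescale hC, pdx_rescale, pdt_rescale]
  simp only [rescale, burgersResidual]
  ring

theorem Cvisc_dilatation (l x t z p : ℝ) :
    Cvisc x t (l * z) (l * l * p) = Cvisc (l * x) (l ^ 2 * t) z p := by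
  unfold Cvisc
  ring

theorem isModifiedBurgersSolution_iff {ν : ℝ} {u : ℝ × ℝ → ℝ} :
    IsModifiedBurgersSolution ν u ↔
      ContDiff ℝ (⊤ : ℕ∞) u ∧ ∀ p, burgersResidual ν Cvisc u p = 0 :=
  Iff.rfl

theorem modified_burgers_invariant_dilatation_general {ν : ℝ} {u : ℝ × ℝ → ℝ}
    (hu : IsModifiedBurgersSolution ν u) (l : ℝ) :
    IsModifiedBurgersSolution ν (rescale l l (l ^ 2) u) := by
  obtain ⟨smooth, residual_eq_zero⟩ := isModifiedBurgersSolution_iff.mp hu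
  refine isModifiedBurgersSolution_iff.mpr ⟨contDiff_rescale l l (l ^ 2) smooth, fun p => ?_⟩
  rw [burgersResidual_rescale (Cvisc_dilatation l), rescale, residual_eq_zero, mul_zero]

/-- The differential approximation of the invariant scheme is preserved by the
dilatation `(x,t,u) ↦ (λ⁻¹x, λ⁻²t, λu)`. -/
theorem modified_burgers_invariant_dilatation (ν : ℝ) (hν : 0 < ν)
    (u : ℝ × ℝ → ℝ) (hu : IsModifiedBurgersSolution ν u) (l : ℝ) (hl : 0 < l) :
    IsModifiedBurgersSolution ν (fun p => l * u (l * p.1, l ^ 2 * p.2)) :=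
  modified_burgers_invariant_dilatation_general hu l
end

section
/- Consider the six smooth vector fields on ℝ⁴ with coordinates (x,t,u,ν): X₁ = (1,0,0,0), X₂ = (0,1,0,0), X₃ = (x, 2t, −u, 0), X₄ = (xt, t², x − ut, 0), X₅ = (t, 0, 1, 0), X₆ = (0, −t, u, ν). Then their real linear span is a Lie algebra: for every i, j ∈ {1,…,6} there exist real constants c₁,…,c₆ such that the Lie bracket [X_i, X_j], defined pointwise by [X,Y](p) = (DY)(p)·X(p) − (DX)(p)·Y(p) (where D denotes the total derivative), equals c₁X₁ + c₂X₂ + c₃X₃ + c₄X₄ + c₅X₅ + c₆X₆ at every point of ℝ⁴. -/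
/-- Pointwise Lie bracket of two vector fields on `ℝ⁴`:
`[X,Y](p) = DY(p)·X(p) − DX(p)·Y(p)`. -/
noncomputable def vfBracket (X Y : ℝ × ℝ × ℝ × ℝ → ℝ × ℝ × ℝ × ℝ) :
    ℝ × ℝ × ℝ × ℝ → ℝ × ℝ × ℝ × ℝ :=
  fun p => fderiv ℝ Y p (X p) - fderiv ℝ X p (Y p)

/-- The six infinitesimal generators of the symmetry group of the Burgers
equation, as vector fields on `ℝ⁴` with coordinates `(x, t, u, ν)`. -/
noncomputable def burgersVF : Fin 6 → (ℝ × ℝ × ℝ × ℝ → ℝ × ℝ × ℝ × ℝ) :=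
  ![fun _ => (1, 0, 0, 0),
    fun _ => (0, 1, 0, 0),
    fun p => (p.1, 2 * p.2.1, -p.2.2.1, 0),
    fun p => (p.1 * p.2.1, p.2.1 ^ 2, p.1 - p.2.2.1 * p.2.1, 0),
    fun p => (p.2.1, 0, 1, 0),
    fun p => (0, -p.2.1, p.2.2.1, p.2.2.2)]

/-!
By antisymmetry it suffices to compute the commutators of generators with `i < j`, and each of them
turns out to be a scalar multiple of a single generator. Structurally, `L₂, L₃, L₄` span a copy of
`sl₂`, the abelian ideal spanned by `L₁, L₅` is its standard representation, and `L₆` acts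
diagonally on the generators. Indexing starts at zero: `Lₖ` is `burgersVF (k - 1)`.
-/

open VectorField

theorem lieBracket_mem_of_forall_lt {𝕜 E ι : Type*} [NontriviallyNormedField 𝕜]
    [NormedAddCommGroup E] [NormedSpace 𝕜 E] [LinearOrder ι] {V : ι → E → E}
    {S : Submodule 𝕜 (E → E)} (hS : ∀ i j, i < j → lieBracket 𝕜 (V i) (V j) ∈ S) (i j : ι) :
    lieBracket 𝕜 (V i) (V j) ∈ S := by
  rcases lt_trichotomy i j with hij | rfl | hji
  · exact hS i j hij
  · simp only [lieBracket_self, zero_mem]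
  · have h_swap : lieBracket 𝕜 (V i) (V j) = -lieBracket 𝕜 (V j) (V i) :=
      funext fun _ => lieBracket_swap
    exact h_swap ▸ neg_mem (hS j i hji)

theorem vfBracket_eq_lieBracket (X Y : ℝ × ℝ × ℝ × ℝ → ℝ × ℝ × ℝ × ℝ) :
    vfBracket X Y = lieBracket ℝ X Y :=
  rfl

section Derivatives

variable (p v : ℝ × ℝ × ℝ × ℝ)

theorem fderiv_burgersVF_zero : fderiv ℝ (burgersVF 0) p v = 0 := by
  simp [burgersVF]

theorem fderiv_burgersVF_one : fderiv ℝ (burgersVF 1) p v = 0 := by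
  simp [burgersVF]

theorem fderiv_burgersVF_two : fderiv ℝ (burgersVF 2) p v = (v.1, 2 * v.2.1, -v.2.2.1, 0) := by
  simp (disch := fun_prop) [burgersVF, DifferentiableAt.fderiv_prodMk, fderiv.fst, fderiv.snd,
    fderiv_const_mul]

theorem fderiv_burgersVF_three :
    fderiv ℝ (burgersVF 3) p v =
      (p.1 * v.2.1 + p.2.1 * v.1, 2 * p.2.1 * v.2.1,
        v.1 - (p.2.2.1 * v.2.1 + p.2.1 * v.2.2.1), 0) := by
  simp (disch := fun_prop) [burgersVF, DifferentiableAt.fderiv_prodMk, fderiv.fst, fderiv.snd,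
    fderiv_fun_mul, fderiv_fun_sub, fderiv_fun_pow]

theorem fderiv_burgersVF_four : fderiv ℝ (burgersVF 4) p v = (v.2.1, 0, 0, 0) := by
  simp (disch := fun_prop) [burgersVF, DifferentiableAt.fderiv_prodMk, fderiv.fst, fderiv.snd]

theorem fderiv_burgersVF_five : fderiv ℝ (burgersVF 5) p v = (0, -v.2.1, v.2.2.1, v.2.2.2) := by
  simp (disch := fun_prop) [burgersVF, DifferentiableAt.fderiv_prodMk, fderiv.fst, fderiv.snd]

end Derivatives

@[simp]
theorem lieBracket_burgersVF_zero_one : lieBracket ℝ (burgersVF 0) (burgersVF 1) = 0 := by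
  ext1 p
  simp only [lieBracket, fderiv_burgersVF_zero, fderiv_burgersVF_one]
  simp

@[simp]
theorem lieBracket_burgersVF_zero_two : lieBracket ℝ (burgersVF 0) (burgersVF 2) = burgersVF 0 := by
  ext1 p
  simp only [lieBracket, fderiv_burgersVF_zero, fderiv_burgersVF_two]
  simp [burgersVF]

@[simp]
theorem lieBracket_burgersVF_zero_three :
    lieBracket ℝ (burgersVF 0) (burgersVF 3) = burgersVF 4 := by
  ext1 p
  simp only [lieBracket, fderiv_burgersVF_zero, fderiv_burgersVF_three]
  simp [burgersVF]

@[simp]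
theorem lieBracket_burgersVF_zero_four : lieBracket ℝ (burgersVF 0) (burgersVF 4) = 0 := by
  ext1 p
  simp only [lieBracket, fderiv_burgersVF_zero, fderiv_burgersVF_four]
  simp [burgersVF]

@[simp]
theorem lieBracket_burgersVF_zero_five : lieBracket ℝ (burgersVF 0) (burgersVF 5) = 0 := by
  ext1 p
  simp only [lieBracket, fderiv_burgersVF_zero, fderiv_burgersVF_five]
  simp [burgersVF]

@[simp]
theorem lieBracket_burgersVF_one_two :
    lieBracket ℝ (burgersVF 1) (burgersVF 2) = (2 : ℝ) • burgersVF 1 := by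
  ext1 p
  simp only [lieBracket, fderiv_burgersVF_one, fderiv_burgersVF_two]
  simp [burgersVF]

@[simp]
theorem lieBracket_burgersVF_one_three :
    lieBracket ℝ (burgersVF 1) (burgersVF 3) = burgersVF 2 := by
  ext1 p
  simp only [lieBracket, fderiv_burgersVF_one, fderiv_burgersVF_three]
  simp [burgersVF]

@[simp]
theorem lieBracket_burgersVF_one_four : lieBracket ℝ (burgersVF 1) (burgersVF 4) = burgersVF 0 := by
  ext1 p
  simp only [lieBracket, fderiv_burgersVF_one, fderiv_burgersVF_four]
  simp [burgersVF]

@[simp]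
theorem lieBracket_burgersVF_one_five :
    lieBracket ℝ (burgersVF 1) (burgersVF 5) = -burgersVF 1 := by
  ext1 p
  simp only [lieBracket, fderiv_burgersVF_one, fderiv_burgersVF_five]
  simp [burgersVF]

@[simp]
theorem lieBracket_burgersVF_two_three :
    lieBracket ℝ (burgersVF 2) (burgersVF 3) = (2 : ℝ) • burgersVF 3 := by
  ext1 p
  simp only [lieBracket, fderiv_burgersVF_two, fderiv_burgersVF_three]
  ext <;> simp [burgersVF] <;> ring

@[simp]
theorem lieBracket_burgersVF_two_four : lieBracket ℝ (burgersVF 2) (burgersVF 4) = burgersVF 4 := by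
  ext1 p
  simp only [lieBracket, fderiv_burgersVF_two, fderiv_burgersVF_four]
  simp [burgersVF, two_mul]

@[simp]
theorem lieBracket_burgersVF_two_five : lieBracket ℝ (burgersVF 2) (burgersVF 5) = 0 := by
  ext1 p
  simp only [lieBracket, fderiv_burgersVF_two, fderiv_burgersVF_five]
  simp [burgersVF]

@[simp]
theorem lieBracket_burgersVF_three_four : lieBracket ℝ (burgersVF 3) (burgersVF 4) = 0 := by
  ext1 p
  simp only [lieBracket, fderiv_burgersVF_three, fderiv_burgersVF_four]
  simp [burgersVF, sq]

@[simp]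
theorem lieBracket_burgersVF_three_five :
    lieBracket ℝ (burgersVF 3) (burgersVF 5) = burgersVF 3 := by
  ext1 p
  simp only [lieBracket, fderiv_burgersVF_three, fderiv_burgersVF_five]
  ext <;> simp [burgersVF] <;> ring

@[simp]
theorem lieBracket_burgersVF_four_five :
    lieBracket ℝ (burgersVF 4) (burgersVF 5) = burgersVF 4 := by
  ext1 p
  simp only [lieBracket, fderiv_burgersVF_four, fderiv_burgersVF_five]
  simp [burgersVF]

theorem lieBracket_burgersVF_mem_span_of_lt (i j : Fin 6) (hij : i < j) :
    lieBracket ℝ (burgersVF i) (burgersVF j) ∈ Submodule.span ℝ (Set.range burgersVF) := by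
  have h_gen (k : Fin 6) : burgersVF k ∈ Submodule.span ℝ (Set.range burgersVF) :=
    Submodule.subset_span (Set.mem_range_self k)
  fin_cases i <;> fin_cases j <;> first
    | exact absurd hij (by decide)
    | simp [h_gen]

/-- The real linear span of the six symmetry generators of the Burgers equation
is closed under the Lie bracket: it is a Lie algebra. -/
theorem burgers_symmetry_lie_algebra :
    ∀ i j : Fin 6, ∃ c : Fin 6 → ℝ, ∀ p : ℝ × ℝ × ℝ × ℝ,
      vfBracket (burgersVF i) (burgersVF j) p =
        ∑ k : Fin 6, c k • burgersVF k p := by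
  intro i j
  have h_mem : lieBracket ℝ (burgersVF i) (burgersVF j) ∈
      Submodule.span ℝ (Set.range burgersVF) :=
    lieBracket_mem_of_forall_lt lieBracket_burgersVF_mem_span_of_lt i j
  obtain ⟨c, hc⟩ := (Submodule.mem_span_range_iff_exists_fun ℝ).mp h_mem
  refine ⟨c, fun p => ?_⟩
  simp only [vfBracket_eq_lieBracket, ← hc, Finset.sum_apply, Pi.smul_apply]
end

section
/- Fix ν > 0, h > 0, τ > 0. For a smooth function u : ℝ × ℝ → ℝ define g₁ = −∂_x(u²/2) + ν·∂²_x u, g₂ = ∂_x(−g₁·u) + ν·∂²_x g₁, and the FTCS first differential approximation operator E[u; h, τ, ν] = ∂_t u + ∂_x(u²/2) − ν·∂²_x u + (τ/2)·g₂ + (h²/12)·∂³_x(u²) − (νh²/12)·∂⁴_x u. Suppose u is a smooth (C^∞) solution of E[u; h, τ, ν] = 0 on ℝ². Then for every λ > 0, the function v(x,t) = λ·u(λx, λ²t) satisfies E[v; h/λ, τ/λ², ν] = 0 on ℝ² (the FTCS first differential approximation is invariant under the dilatation (x,t,u,h,τ) ↦ (λ⁻¹x, λ⁻²t, λu, λ⁻¹h,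 λ⁻²τ)). -/
/-- \`g₁ = −(u²/2)_x + ν u_xx\`. -/
noncomputable def g1 (ν : ℝ) (u : ℝ × ℝ → ℝ) : ℝ × ℝ → ℝ :=
  fun p => -pdx (fun q => (u q) ^ 2 / 2) p + ν * pdx (pdx u) p

/-- \`g₂ = (−g₁ u)_x + ν (g₁)_xx\`. -/
noncomputable def g2 (ν : ℝ) (u : ℝ × ℝ → ℝ) : ℝ × ℝ → ℝ :=
  fun p => pdx (fun q => -g1 ν u q * u q) p + ν * pdx (pdx (g1 ν u)) p

/-- \`g₃ = (−g₂ u − g₁²)_x + ν (g₂)_xx\`. -/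
noncomputable def g3 (ν : ℝ) (u : ℝ × ℝ → ℝ) : ℝ × ℝ → ℝ :=
  fun p => pdx (fun q => -g2 ν u q * u q - (g1 ν u q) ^ 2) p
    + ν * pdx (pdx (g2 ν u)) p

/-- The first differential approximation operator of the FTCS scheme:
\`E[u; h, τ, ν] = u_t + (u²/2)_x − ν u_xx + (τ/2) g₂ + (h²/12)(u²)_xxx −
(νh²/12) u_xxxx\`. -/
noncomputable def ftcsFDA (h τ ν : ℝ) (u : ℝ × ℝ → ℝ) : ℝ × ℝ → ℝ :=
  fun p =>
    pdt u p + pdx (fun q => (u q) ^ 2 / 2) p - ν * pdx (pdx u) p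
      + τ / 2 * g2 ν u p
      + h ^ 2 / 12 * pdx (pdx (pdx (fun q => (u q) ^ 2))) p
      - ν * h ^ 2 / 12 * pdx (pdx (pdx (pdx u))) p

/-- The first differential approximation operator of the Lax–Wendroff scheme:
\`E[u; h, τ, ν] = u_t + (u²/2)_x − ν u_xx + (τ²/6) g₃ + (h²/12)(u²)_xxx −
(νh²/12) u_xxxx\`. -/
noncomputable def laxWendroffFDA (h τ ν : ℝ) (u : ℝ × ℝ → ℝ) : ℝ × ℝ → ℝ :=
  fun p =>
    pdt u p + pdx (fun q => (u q) ^ 2 / 2) p - ν * pdx (pdx u) p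
      + τ ^ 2 / 6 * g3 ν u p
      + h ^ 2 / 12 * pdx (pdx (pdx (fun q => (u q) ^ 2))) p
      - ν * h ^ 2 / 12 * pdx (pdx (pdx (pdx u))) p

/-!
Every term of the operator picks up the same factor when the independent variables, the amplitude,
the viscosity and the step sizes are rescaled together, so rescaling commutes with the operator up
to that factor. Fixing the viscosity leaves the one-parameter group of dilatations.
-/

/-- The function `u` with its two arguments rescaled by `a` and `b` and its values by `c`. The
three factors are independent, so that a partial derivative only changes the amplitude `c`. -/
def dilate (c a b : ℝ) (u : ℝ × ℝ → ℝ) : ℝ × ℝ → ℝ :=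
  fun q => c * u (a * q.1, b * q.2)

section dilate

variable (c a b : ℝ) (u : ℝ × ℝ → ℝ)

theorem pdx_dilate : pdx (dilate c a b u) = dilate (c * a) a b (pdx u) := by
  funext p
  have chain_rule := deriv_comp_mul_left a (fun y => u (y, b * p.2)) p.1
  simp only [pdx, dilate, deriv_const_mul_field, chain_rule, smul_eq_mul, mul_assoc]

theorem pdt_dilate : pdt (dilate c a b u) = dilate (c * b) a b (pdt u) := by
  funext p
  have chain_rule := deriv_comp_mul_left b (fun s => u (a * p.1, s)) p.2
  simp only [pdt, dilate, deriv_const_mul_field, chain_rule, smul_eq_mul, mul_assoc]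

theorem dilate_sq :
    (fun q => dilate c a b u q ^ 2) = dilate (c ^ 2) a b (fun q => u q ^ 2) :=
  funext fun _ => mul_pow _ _ _

theorem dilate_sq_div_two :
    (fun q => dilate c a b u q ^ 2 / 2) = dilate (c ^ 2) a b (fun q => u q ^ 2 / 2) := by
  funext q
  simp only [dilate]
  ring

theorem neg_dilate_mul_dilate (d : ℝ) (v : ℝ × ℝ → ℝ) :
    (fun q => -dilate c a b u q * dilate d a b v q) =
      dilate (c * d) a b (fun q => -u q * v q) := by
  funext q
  simp only [dilate]
  ring

-- The amplitude `c * a` is what gives `(u²/2)_x` and `ν u_xx` the same weight `c² a³`.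
theorem g1_dilate (ν : ℝ) :
    g1 (c * ν) (dilate (c * a) a b u) = dilate (c ^ 2 * a ^ 3) a b (g1 ν u) := by
  funext p
  simp only [g1, dilate_sq_div_two, pdx_dilate]
  simp only [dilate, g1]
  ring

theorem g2_dilate (ν : ℝ) :
    g2 (c * ν) (dilate (c * a) a b u) = dilate (c ^ 3 * a ^ 5) a b (g2 ν u) := by
  funext p
  simp only [g2, g1_dilate, neg_dilate_mul_dilate, pdx_dilate]
  simp only [dilate, g2]
  ring

-- The time factor `c * a ^ 2` is forced by `u_t` having the same weight as `(u²/2)_x`.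
theorem ftcsFDA_invariant_dilatation_general (h τ ν : ℝ) :
    ftcsFDA h τ (c * ν) (dilate (c * a) a (c * a ^ 2) u) =
      dilate (c ^ 2 * a ^ 3) a (c * a ^ 2) (ftcsFDA (a * h) (c * a ^ 2 * τ) ν u) := by
  funext p
  simp only [ftcsFDA, g2_dilate, dilate_sq_div_two, dilate_sq, pdx_dilate, pdt_dilate]
  simp only [dilate, ftcsFDA]
  ring

end dilate

/-- The FTCS first differential approximation is invariant under the dilatation
`(x,t,u,h,τ) ↦ (λ⁻¹x, λ⁻²t, λu, λ⁻¹h, λ⁻²τ)`. -/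
theorem ftcsFDA_invariant_dilatation (ν h τ : ℝ) (hν : 0 < ν) (hh : 0 < h)
    (hτ : 0 < τ) (u : ℝ × ℝ → ℝ) (hu : ContDiff ℝ (⊤ : ℕ∞) u)
    (hE : ∀ p : ℝ × ℝ, ftcsFDA h τ ν u p = 0) (l : ℝ) (hl : 0 < l) :
    ∀ p : ℝ × ℝ,
      ftcsFDA (h / l) (τ / l ^ 2) ν
        (fun q => l * u (l * q.1, l ^ 2 * q.2)) p = 0 := by
  intro p
  have covariance := congrFun (ftcsFDA_invariant_dilatation_general 1 l u (h / l) (τ / l ^ 2) ν) p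
  simp only [one_mul, mul_div_cancel₀ h hl.ne', mul_div_cancel₀ τ (pow_ne_zero 2 hl.ne')]
    at covariance
  exact covariance.trans (by rw [dilate, hE, mul_zero])
end

section
/- Fix ν > 0, h > 0, τ > 0. For a smooth function u : ℝ × ℝ → ℝ define g₁ = −∂_x(u²/2) + ν·∂²_x u, g₂ = ∂_x(−g₁·u) + ν·∂²_x g₁ (with viscosity parameter ν in g₁, g₂), and the FTCS first differential approximation operator E[u; h, τ, ν] = ∂_t u + ∂_x(u²/2) − ν·∂²_x u + (τ/2)·g₂ + (h²/12)·∂³_x(u²) − (νh²/12)·∂⁴_x u. Suppose u is a smooth (C^∞) solution of E[u; h, τ, ν] = 0 on ℝ². Then for every λ > 0, the function v(x,t) = λ·u(x, λt) satisfies E[v; h, τ/λ, λν] = 0 on ℝ², where in E[v; h, τ/λ, λν] the functions g₁, g₂ are formed with viscosity λν (invariance of the FTCS first differential approximation under the dilatation (x,t,u,h,τ,ν) ↦ (x, λ⁻¹t, λu, h, λ⁻¹τ, λν)). -/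
/-!
Give `x`, `h` weight `0`, `u`, `ν` weight `1` and `t`, `τ` weight `-1`. Then `∂ₓ` preserves weights,
`∂ₜ` raises them by one and products add them, so `g₁`, `g₂` are homogeneous of weights `2`, `3` and
every term of the differential approximation is homogeneous of weight `2`. Hence dilating `u`
multiplies the whole operator by `l ^ 2`.
-/

/-- The dilatation `t ↦ l⁻¹ t` acting on a field of weight `k`: the field `w` becomes
`(x, t) ↦ l ^ k * w (x, l * t)`. Recording the weight as an argument makes the homogeneity of a
differential expression visible in its statement. -/
def timeDilate (l : ℝ) (k : ℕ) (w : ℝ × ℝ → ℝ) : ℝ × ℝ → ℝ :=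
  fun q => l ^ k * w (q.1, l * q.2)

section TimeDilate

variable (l : ℝ) (j k : ℕ) (v w : ℝ × ℝ → ℝ)

theorem timeDilate_one : timeDilate l 1 w = fun q => l * w (q.1, l * q.2) := by
  funext q
  simp only [timeDilate, pow_one]

theorem timeDilate_sq :
    (fun q => timeDilate l k w q ^ 2) = timeDilate l (2 * k) (fun q => w q ^ 2) := by
  funext q
  simp only [timeDilate]
  ring

theorem timeDilate_sq_div_two :
    (fun q => timeDilate l k w q ^ 2 / 2) = timeDilate l (2 * k) (fun q => w q ^ 2 / 2) := by
  funext q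
  simp only [timeDilate]
  ring

theorem neg_timeDilate_mul_timeDilate :
    (fun q => -timeDilate l j v q * timeDilate l k w q) =
      timeDilate l (j + k) (fun q => -v q * w q) := by
  funext q
  simp only [timeDilate]
  ring

theorem pdx_timeDilate : pdx (timeDilate l k w) = timeDilate l k (pdx w) := by
  funext p
  exact deriv_const_mul_field (l ^ k)

theorem pdt_timeDilate : pdt (timeDilate l k w) = timeDilate l (k + 1) (pdt w) := by
  funext p
  calc pdt (timeDilate l k w) p
      = l ^ k * deriv (fun s => w (p.1, l * s)) p.2 := deriv_const_mul_field (l ^ k)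
    _ = l ^ k * (l * pdt w (p.1, l * p.2)) :=
        congrArg (l ^ k * ·) (deriv_comp_mul_left l (fun s => w (p.1, s)) p.2)
    _ = timeDilate l (k + 1) (pdt w) p := by
        simp only [timeDilate]
        ring

end TimeDilate

section Homogeneity

variable (l ν : ℝ) (u : ℝ × ℝ → ℝ)

theorem g1_timeDilate : g1 (l * ν) (timeDilate l 1 u) = timeDilate l 2 (g1 ν u) := by
  funext p
  simp only [g1, timeDilate_sq_div_two, pdx_timeDilate]
  simp only [timeDilate, g1]
  ring

theorem g2_timeDilate : g2 (l * ν) (timeDilate l 1 u) = timeDilate l 3 (g2 ν u) := by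
  funext p
  simp only [g2, g1_timeDilate, neg_timeDilate_mul_timeDilate, pdx_timeDilate]
  simp only [timeDilate, g2]
  ring

-- At `l = 0` the quotient `τ / l` is the junk value `0`, and both sides vanish.
theorem ftcsFDA_timeDilate (h τ : ℝ) :
    ftcsFDA h (τ / l) (l * ν) (timeDilate l 1 u) = timeDilate l 2 (ftcsFDA h τ ν u) := by
  funext p
  simp only [ftcsFDA, g2_timeDilate, timeDilate_sq, timeDilate_sq_div_two, pdx_timeDilate,
    pdt_timeDilate]
  simp only [timeDilate, ftcsFDA]
  field_simp
  ring

end Homogeneity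

theorem ftcsFDA_invariant_dilatation_viscosity_general (ν h τ : ℝ) (u : ℝ × ℝ → ℝ) {l : ℝ}
    (hl : l ≠ 0) (p : ℝ × ℝ) :
    ftcsFDA h (τ / l) (l * ν) (fun q => l * u (q.1, l * q.2)) p = 0 ↔
      ftcsFDA h τ ν u (p.1, l * p.2) = 0 := by
  rw [← timeDilate_one, ftcsFDA_timeDilate]
  exact mul_eq_zero_iff_left (pow_ne_zero 2 hl)

/-- The FTCS first differential approximation is invariant under the dilatation
`(x,t,u,h,τ,ν) ↦ (x, λ⁻¹t, λu, h, λ⁻¹τ, λν)` acting also on the viscosity. -/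
theorem ftcsFDA_invariant_dilatation_viscosity (ν h τ : ℝ) (hν : 0 < ν)
    (hh : 0 < h) (hτ : 0 < τ) (u : ℝ × ℝ → ℝ) (hu : ContDiff ℝ (⊤ : ℕ∞) u)
    (hE : ∀ p : ℝ × ℝ, ftcsFDA h τ ν u p = 0) (l : ℝ) (hl : 0 < l) :
    ∀ p : ℝ × ℝ,
      ftcsFDA h (τ / l) (l * ν) (fun q => l * u (q.1, l * q.2)) p = 0 := by
  intro p
  exact (ftcsFDA_invariant_dilatation_viscosity_general ν h τ u hl.ne' p).2 (hE _)
end
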